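/- Let G(q) be the Monge metric of the Oriented Associativity equation and let φ : (u¹,…,u⁶) ↦ (q¹,…,q⁶) be the coordinate change q¹ = (1/4)(u¹+u²+u³)² − (u¹u²+u¹u³+u²u³) − (1/4)(u⁶)² − u⁴u⁵; q² = (2u¹u²u³ + (u¹+u²+u³−u⁶)q¹)/(2u⁵); q³ = (1/2)(u¹+u²+u³+u⁶); q⁴ = u⁴; q⁵ = u⁵; q⁶ = (1/2)(u¹+u²+u³−u⁶). Then for every u ∈ ℝ⁶ with u⁵ ≠ 0, the absolute value of the determinant of G(φ(u)) equals ((u¹−u²)(u¹−u³)(u²−u³)u⁵)². In particular, G(φ(u)) is invertible exactly when u¹, u², u³ are pairwise distinct and u⁵ ≠ 0. -/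

import Mathlib

/-- The Monge metric `G(q)` of the Oriented Associativity equation
(0-based indices: `q i = qⁱ⁺¹`). -/
def G (q : Fin 6 → ℝ) : Matrix (Fin 6) (Fin 6) ℝ :=
  !![2, 0, q 2, -q 4, 2 * q 3, 0;
     0, 0, 2 * q 4, 0, -q 2 + 2 * q 5, -q 4;
     q 2, 2 * q 4, -2 * (q 0 + q 3 * q 4), q 4 * (q 2 - q 5),
       -q 1 + q 3 * (q 2 - q 5), 2 * q 3 * q 4;
     -q 4, 0, q 4 * (q 2 - q 5), 2 * (q 4) ^ 2,
       -q 0 + q 2 * (-q 2 + 2 * q 5) - 2 * q 3 * q 4 - (q 5) ^ 2, q 4 * (-q 2 + q 5);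
     2 * q 3, -q 2 + 2 * q 5, -q 1 + q 3 * (q 2 - q 5),
       -q 0 + q 2 * (-q 2 + 2 * q 5) - 2 * q 3 * q 4 - (q 5) ^ 2, 2 * (q 3) ^ 2,
       -q 1 + q 3 * (-q 2 + q 5);
     0, -q 4, 2 * q 3 * q 4, q 4 * (-q 2 + q 5), -q 1 + q 3 * (-q 2 + q 5),
       -2 * q 3 * q 4]

/-- The coordinate change `φ : (u¹,…,u⁶) ↦ (q¹,…,q⁶)` (0-based indices: `x i = uⁱ⁺¹`). -/
noncomputable def phi (x : Fin 6 → ℝ) : Fin 6 → ℝ :=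
  let q1 : ℝ := (1 / 4) * (x 0 + x 1 + x 2) ^ 2 - (x 0 * x 1 + x 0 * x 2 + x 1 * x 2)
    - (1 / 4) * (x 5) ^ 2 - x 3 * x 4
  ![q1,
    (2 * x 0 * x 1 * x 2 + (x 0 + x 1 + x 2 - x 5) * q1) / (2 * x 4),
    (1 / 2) * (x 0 + x 1 + x 2 + x 5),
    x 3,
    x 4,
    (1 / 2) * (x 0 + x 1 + x 2 - x 5)]

set_option maxHeartbeats 4000000 in
theorem G_det (q : Fin 6 → ℝ) : (G q).det = -((q 4) ^ 2 *
    ((q 2 + q 5) ^ 2 * (q 2 * q 5 - q 0 - q 3 * q 4) ^ 2 - 4 * (q 2 * q 5 - q 0 - q 3 * q 4) ^ 3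
      - 4 * (q 2 + q 5) ^ 3 * (q 1 * q 4 - q 5 * q 0)
      + 18 * (q 2 + q 5) * (q 2 * q 5 - q 0 - q 3 * q 4) * (q 1 * q 4 - q 5 * q 0)
      - 27 * (q 1 * q 4 - q 5 * q 0) ^ 2)) := by
  unfold G
  generalize q 0 = a
  generalize q 1 = b
  generalize q 2 = c
  generalize q 3 = d
  generalize q 4 = e
  generalize q 5 = f
  simp [Matrix.det_succ_row_zero, Fin.sum_univ_succ, Fin.succAbove]
  ring

theorem G_phi_det (u : Fin 6 → ℝ) (h : u 4 ≠ 0) : (G (phi u)).det =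
    -((u 0 - u 1) * (u 0 - u 2) * (u 1 - u 2) * u 4) ^ 2 := by
  have h3 : phi u 1 * phi u 4 - phi u 5 * phi u 0 = u 0 * u 1 * u 2 := by
    simp only [phi, Matrix.cons_val]
    field_simp
    ring
  have h1 : phi u 2 + phi u 5 = u 0 + u 1 + u 2 := by
    simp only [phi, Matrix.cons_val]
    ring
  have h2 : phi u 2 * phi u 5 - phi u 0 - phi u 3 * phi u 4
      = u 0 * u 1 + u 0 * u 2 + u 1 * u 2 := by
    simp only [phi, Matrix.cons_val]
    ring
  have h4 : phi u 4 = u 4 := by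
    simp only [phi, Matrix.cons_val]
  rw [G_det, h1, h2, h3, h4]
  ring

/-- for every `u` with `u⁵ ≠ 0`, the absolute value of `det G(φ(u))` is
`((u¹−u²)(u¹−u³)(u²−u³)u⁵)²`; in particular `G(φ(u))` is invertible exactly when
`u¹, u², u³` are pairwise distinct and `u⁵ ≠ 0`. -/
theorem statement11 :
    ∀ u : Fin 6 → ℝ, u 4 ≠ 0 →
      |(G (phi u)).det| = ((u 0 - u 1) * (u 0 - u 2) * (u 1 - u 2) * u 4) ^ 2 ∧
      (IsUnit (G (phi u)) ↔ (u 0 ≠ u 1 ∧ u 0 ≠ u 2 ∧ u 1 ≠ u 2) ∧ u 4 ≠ 0) := by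
  intro u h
  have hd := G_phi_det u h
  refine ⟨?_, ?_⟩
  · rw [hd, abs_neg, abs_of_nonneg (sq_nonneg _)]
  · rw [Matrix.isUnit_iff_isUnit_det, isUnit_iff_ne_zero, hd]
    simp [sub_eq_zero, h, and_assoc]
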